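/- For every triple of signs ε = (ε_τ, ε_α, ε_β) ∈ {−1,1}³ one has Σ_T^{(ε)} = Σ_T; that is, the set Σ_T of solutions of the SOV quadratic system is invariant under the Z₂×Z₂×Z₂ transformations (τ₊, α₊, β₊, τ₋, α₋, β₋) ↦ (ε_τ τ₊, ε_α α₊, ε_β β₊, ε_τ τ₋, ε_α α₋, ε_β β₋) of the boundary parameters. -/

import Mathlib

/-!
The boundary parameters enter `Σ_T` only through the function `f` and the constants `q_n`, and each
of these is separately invariant under the sign changes, so the defining systems coincide.

* In `q_n` they occur through the products `g±(ξ_n + η/2) g±(η/2 - ξ_n)`, in which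
  `sinh(α + ξ) sinh(α - ξ)` and `cosh(ξ - β) cosh(ξ + β)` are even in `α` and `β`, as are the squared
  denominators (`gPlus_mul_gPlus`, `gMinus_mul_gMinus`).
* In `f` they occur through `A(η/2)`, `A(η/2 + iπ/2)` and the leading coefficient. One has
  `g±(η/2) = (sinh α± cosh β±)/(sinh α± cosh β±)`, while `g±(η/2 + iπ/2) = ± coth α± tanh β±`; a
  common sign change of the `+` and `-` parameters cancels in the product `g₊ g₋`. The leading
  coefficient is even in `τ₊ - τ₋` and contains `sinh α₊ sinh α₋` and `cosh β₊ cosh β₋`.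
-/

open Complex Finset

noncomputable section

namespace XXZ

/-- `a(λ) = ∏ₙ sinh(λ - ξₙ + η/2)` -/
def aF (N : ℕ) (η : ℂ) (ξ : Fin N → ℂ) (z : ℂ) : ℂ :=
  ∏ n : Fin N, Complex.sinh (z - ξ n + η / 2)

/-- `d(λ) = a(λ - η)` -/
def dF (N : ℕ) (η : ℂ) (ξ : Fin N → ℂ) (z : ℂ) : ℂ := aF N η ξ (z - η)

/-- `g₊(λ)` -/
def gPlus (η αp βp : ℂ) (z : ℂ) : ℂ :=
  Complex.sinh (z + αp - η / 2) * Complex.cosh (z - βp - η / 2) /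
    (Complex.sinh αp * Complex.cosh βp)

/-- `g₋(λ)` -/
def gMinus (η αm βm : ℂ) (z : ℂ) : ℂ :=
  Complex.sinh (z + αm - η / 2) * Complex.cosh (z + βm - η / 2) /
    (Complex.sinh αm * Complex.cosh βm)

/-- `A(λ)` -/
def AF (N : ℕ) (η : ℂ) (ξ : Fin N → ℂ) (αp βp αm βm : ℂ) (z : ℂ) : ℂ :=
  (-1 : ℂ) ^ N * (Complex.sinh (2 * z + η) / Complex.sinh (2 * z)) *
    gPlus η αp βp z * gMinus η αm βm z * aF N η ξ z * dF N η ξ (-z)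

/-- `ζₙ⁽⁰⁾ = ξₙ - η/2` -/
def zeta0 (N : ℕ) (η : ℂ) (ξ : Fin N → ℂ) (n : Fin N) : ℂ := ξ n - η / 2

/-- `ζₙ⁽¹⁾ = ξₙ + η/2` -/
def zeta1 (N : ℕ) (η : ℂ) (ξ : Fin N → ℂ) (n : Fin N) : ℂ := ξ n + η / 2

/-- `g_a(λ)` -/
def gA (N : ℕ) (η : ℂ) (ξ : Fin N → ℂ) (a : Fin N) (z : ℂ) : ℂ :=
  (Complex.cosh (2 * z) ^ 2 - Complex.cosh η ^ 2) /
      (Complex.cosh (2 * zeta0 N η ξ a) ^ 2 - Complex.cosh η ^ 2) *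
    ∏ b ∈ Finset.univ.erase a,
      (Complex.cosh (2 * z) - Complex.cosh (2 * zeta0 N η ξ b)) /
        (Complex.cosh (2 * zeta0 N η ξ a) - Complex.cosh (2 * zeta0 N η ξ b))

/-- `f(λ)`, with `κ₊κ₋/(sinh ζ₊ sinh ζ₋)` expressed as
`1/(4 sinh α₊ cosh β₊ sinh α₋ cosh β₋)`. -/
def fF (N : ℕ) (η : ℂ) (ξ : Fin N → ℂ) (τp τm αp βp αm βm : ℂ) (z : ℂ) : ℂ :=
  (Complex.cosh (2 * z) + Complex.cosh η) / (2 * Complex.cosh η) *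
      (∏ b : Fin N, (Complex.cosh (2 * z) - Complex.cosh (2 * zeta0 N η ξ b)) /
        (Complex.cosh η - Complex.cosh (2 * zeta0 N η ξ b))) *
      AF N η ξ αp βp αm βm (η / 2)
  - (-1 : ℂ) ^ N * ((Complex.cosh (2 * z) - Complex.cosh η) / (2 * Complex.cosh η)) *
      (∏ b : Fin N, (Complex.cosh (2 * z) - Complex.cosh (2 * zeta0 N η ξ b)) /
        (Complex.cosh η + Complex.cosh (2 * zeta0 N η ξ b))) *
      AF N η ξ αp βp αm βm (η / 2 + Real.pi * Complex.I / 2)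
  + (2 : ℂ) ^ ((1 : ℤ) - (N : ℤ)) *
      (Complex.cosh (τp - τm) /
        (4 * Complex.sinh αp * Complex.cosh βp * Complex.sinh αm * Complex.cosh βm)) *
      (Complex.cosh (2 * z) ^ 2 - Complex.cosh η ^ 2) *
      ∏ b : Fin N, (Complex.cosh (2 * z) - Complex.cosh (2 * zeta0 N η ξ b))

/-- `qₙ` -/
def qF (N : ℕ) (η : ℂ) (ξ : Fin N → ℂ) (αp βp αm βm : ℂ) (n : Fin N) : ℂ :=
  Complex.sinh (2 * η - 2 * ξ n) * Complex.sinh (2 * ξ n + 2 * η) *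
    gPlus η αp βp (ξ n + η / 2) * gPlus η αp βp (η / 2 - ξ n) *
    gMinus η αm βm (ξ n + η / 2) * gMinus η αm βm (η / 2 - ξ n) *
    aF N η ξ (ξ n + η / 2) * dF N η ξ (ξ n - η / 2) *
    aF N η ξ (η / 2 - ξ n) * dF N η ξ (-ξ n - η / 2) /
    (Complex.sinh (η + 2 * ξ n) * Complex.sinh (η - 2 * ξ n))

/-- `Σ_T` (as a function of the boundary parameters `τ±, α±, β±`). -/
def SigmaT (N : ℕ) (η : ℂ) (ξ : Fin N → ℂ) (τp τm αp βp αm βm : ℂ) : Set (ℂ → ℂ) :=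
  { t | ∃ x : Fin N → ℂ,
      (∀ n : Fin N,
        x n * ((∑ a : Fin N, gA N η ξ a (zeta1 N η ξ n) * x a) +
          fF N η ξ τp τm αp βp αm βm (zeta1 N η ξ n)) = qF N η ξ αp βp αm βm n) ∧
      t = fun z => fF N η ξ τp τm αp βp αm βm z + ∑ a : Fin N, gA N η ξ a z * x a }

/-- genericity of the inhomogeneity parameters -/
def Generic (N : ℕ) (η : ℂ) (ξ : Fin N → ℂ) : Prop :=
  (∀ a b : Fin N, a ≠ b → ∀ r : ℤ, |r| ≤ 1 → ∀ k : ℤ,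
      ξ a + ξ b - r * η ≠ Real.pi * Complex.I * k ∧
      ξ a - ξ b - r * η ≠ Real.pi * Complex.I * k) ∧
  ∀ a : Fin N, Complex.cosh (2 * zeta0 N η ξ a) ^ 2 ≠ Complex.cosh η ^ 2

/-- `Y⁽ⁱ'ʳ⁾(τ±, α±, β±)` -/
def YF (N : ℕ) (η τp τm αp βp αm βm : ℂ) (i : ℕ) (r : ℤ) : ℂ :=
  τm - τp + (-1 : ℂ) ^ i * (((N : ℂ) - 1 - (r : ℂ)) * η + αm + αp + βm - βp)

/-- `X_{k,m}⁽ⁱ⁾` -/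
def XF (N : ℕ) (η τp τm αp βp αm βm : ℂ) (i k m : ℕ) : ℂ :=
  (-1 : ℂ) ^ i * (1 - (N : ℂ)) * η + τm - τp + (-1 : ℂ) ^ k * (αm + βm) -
    (-1 : ℂ) ^ m * (αp - βp) + Real.pi * Complex.I * ((k : ℂ) + (m : ℂ))

/-- the boundary parameters lie in `N_SOV` -/
def InNSOV (N : ℕ) (η τp τm αp βp αm βm : ℂ) : Prop :=
  ∃ k h m n : Fin 2,
    XF N η τp τm αp βp αm βm 0 (k : ℕ) (m : ℕ) = 0 ∧
    XF N η τp τm αp βp αm βm 1 (h : ℕ) (n : ℕ) = 0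

/-- `F₀` (in the `τ, α, β` parametrization) -/
def F0 (N : ℕ) (η τp τm αp βp αm βm : ℂ) : ℂ :=
  (Complex.cosh (τp - τm) - Complex.cosh (αp + αm - βp + βm - ((N : ℂ) + 1) * η)) /
    (2 * Complex.sinh αp * Complex.cosh βp * Complex.sinh αm * Complex.cosh βm)

/-- the inhomogeneous term `F(λ)` -/
def FF (N : ℕ) (η : ℂ) (ξ : Fin N → ℂ) (τp τm αp βp αm βm : ℂ) (z : ℂ) : ℂ :=
  2 ^ N * F0 N η τp τm αp βp αm βm *
    (Complex.cosh (2 * z) ^ 2 - Complex.cosh η ^ 2) *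
    aF N η ξ z * aF N η ξ (-z) * dF N η ξ z * dF N η ξ (-z)

/-- `Q` is of Bethe form of degree `N` -/
def BetheForm (N : ℕ) (Q : ℂ → ℂ) : Prop :=
  ∃ l : Fin N → ℂ, ∀ z : ℂ,
    Q z = 2 ^ N * ∏ a : Fin N, (Complex.cosh (2 * z) - Complex.cosh (2 * l a))

/-- `Z_Q(λ) = A(λ)Q(λ-η) + A(-λ)Q(λ+η)` -/
def ZZ (N : ℕ) (η : ℂ) (ξ : Fin N → ℂ) (αp βp αm βm : ℂ) (Q : ℂ → ℂ) (z : ℂ) : ℂ :=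
  AF N η ξ αp βp αm βm z * Q (z - η) + AF N η ξ αp βp αm βm (-z) * Q (z + η)

/-- `t` is a trigonometric polynomial of degree `M` -/
def IsTrigPolyDeg (M : ℕ) (t : ℂ → ℂ) : Prop :=
  ∃ P : Polynomial ℂ, P.natDegree = M ∧
    ∀ z : ℂ, Complex.exp ((M : ℂ) * z) * t z = Polynomial.eval (Complex.exp (2 * z)) P

/-- `t` is a trigonometric polynomial -/
def IsTrigPoly (t : ℂ → ℂ) : Prop := ∃ M : ℕ, IsTrigPolyDeg M t

theorem gPlus_mul_gPlus (η α β x : ℂ) {εa εb : ℂ}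
    (hεa : εa = 1 ∨ εa = -1) (hεb : εb = 1 ∨ εb = -1) :
    gPlus η (εa * α) (εb * β) (x + η / 2) * gPlus η (εa * α) (εb * β) (η / 2 - x) =
      gPlus η α β (x + η / 2) * gPlus η α β (η / 2 - x) := by
  have e1 : ∀ a : ℂ, x + η / 2 + a - η / 2 = x + a := fun a => by ring
  have e2 : ∀ a : ℂ, η / 2 - x + a - η / 2 = -x + a := fun a => by ring
  have e3 : ∀ a : ℂ, x + η / 2 - a - η / 2 = x - a := fun a => by ring
  have e4 : ∀ a : ℂ, η / 2 - x - a - η / 2 = -x - a := fun a => by ring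
  simp only [gPlus, e1, e2, e3, e4]
  rcases hεa with rfl | rfl <;> rcases hεb with rfl | rfl <;>
    simp only [one_mul, neg_one_mul, sinh_neg, cosh_neg, sinh_add, cosh_sub] <;> ring

theorem gMinus_eq_gPlus (η α β z : ℂ) : gMinus η α β z = gPlus η α (-β) z := by
  simp [gMinus, gPlus]

theorem gMinus_mul_gMinus (η α β x : ℂ) {εa εb : ℂ}
    (hεa : εa = 1 ∨ εa = -1) (hεb : εb = 1 ∨ εb = -1) :
    gMinus η (εa * α) (εb * β) (x + η / 2) * gMinus η (εa * α) (εb * β) (η / 2 - x) =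
      gMinus η α β (x + η / 2) * gMinus η α β (η / 2 - x) := by
  simp only [gMinus_eq_gPlus, ← mul_neg]
  exact gPlus_mul_gPlus η α (-β) x hεa hεb

theorem gPlus_half (η α β : ℂ) :
    gPlus η α β (η / 2) = sinh α * cosh β / (sinh α * cosh β) := by
  have e1 : η / 2 + α - η / 2 = α := by ring
  have e2 : η / 2 - β - η / 2 = -β := by ring
  rw [gPlus, e1, e2, cosh_neg]

theorem gPlus_half_add (η α β : ℂ) :
    gPlus η α β (η / 2 + Real.pi * I / 2) = cosh α * sinh β / (sinh α * cosh β) := by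
  have e1 : η / 2 + Real.pi * I / 2 + α - η / 2 = α + Real.pi / 2 * I := by ring
  have e2 : η / 2 + Real.pi * I / 2 - β - η / 2 = Real.pi / 2 * I - β := by ring
  rw [gPlus, e1, e2, sinh_add, cosh_sub, cosh_mul_I, sinh_mul_I, Complex.cos_pi_div_two,
    Complex.sin_pi_div_two]
  congr 1
  linear_combination (-cosh α * sinh β) * I_mul_I

theorem AF_half (N : ℕ) (η : ℂ) (ξ : Fin N → ℂ) (αp βp αm βm : ℂ) {εa εb : ℂ}
    (hεa : εa = 1 ∨ εa = -1) (hεb : εb = 1 ∨ εb = -1) :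
    AF N η ξ (εa * αp) (εb * βp) (εa * αm) (εb * βm) (η / 2) =
      AF N η ξ αp βp αm βm (η / 2) := by
  simp only [AF, gMinus_eq_gPlus, gPlus_half]
  rcases hεa with rfl | rfl <;> rcases hεb with rfl | rfl <;>
    simp only [one_mul, neg_one_mul, sinh_neg, cosh_neg, neg_mul, neg_div_neg_eq]

theorem AF_half_add (N : ℕ) (η : ℂ) (ξ : Fin N → ℂ) (αp βp αm βm : ℂ) {εa εb : ℂ}
    (hεa : εa = 1 ∨ εa = -1) (hεb : εb = 1 ∨ εb = -1) :
    AF N η ξ (εa * αp) (εb * βp) (εa * αm) (εb * βm) (η / 2 + Real.pi * I / 2) =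
      AF N η ξ αp βp αm βm (η / 2 + Real.pi * I / 2) := by
  simp only [AF, gMinus_eq_gPlus, gPlus_half_add]
  rcases hεa with rfl | rfl <;> rcases hεb with rfl | rfl <;>
    simp only [one_mul, neg_one_mul, sinh_neg, cosh_neg, neg_mul, mul_neg, div_neg, neg_div,
      neg_neg]

theorem fF_sign (N : ℕ) (η : ℂ) (ξ : Fin N → ℂ) (τp τm αp βp αm βm : ℂ) {εt εa εb : ℂ}
    (hεt : εt = 1 ∨ εt = -1) (hεa : εa = 1 ∨ εa = -1) (hεb : εb = 1 ∨ εb = -1) (z : ℂ) :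
    fF N η ξ (εt * τp) (εt * τm) (εa * αp) (εb * βp) (εa * αm) (εb * βm) z =
      fF N η ξ τp τm αp βp αm βm z := by
  have hτ : cosh (εt * τp - εt * τm) = cosh (τp - τm) := by
    rw [← mul_sub]
    rcases hεt with rfl | rfl <;> simp only [one_mul, neg_one_mul, cosh_neg]
  have hden : 4 * sinh (εa * αp) * cosh (εb * βp) * sinh (εa * αm) * cosh (εb * βm) =
      4 * sinh αp * cosh βp * sinh αm * cosh βm := by
    rcases hεa with rfl | rfl <;> rcases hεb with rfl | rfl <;>
      simp only [one_mul, neg_one_mul, sinh_neg, cosh_neg, neg_mul, mul_neg, neg_neg]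
  simp only [fF, AF_half N η ξ αp βp αm βm hεa hεb, AF_half_add N η ξ αp βp αm βm hεa hεb, hτ,
    hden]

theorem qF_sign (N : ℕ) (η : ℂ) (ξ : Fin N → ℂ) (αp βp αm βm : ℂ) {εa εb : ℂ}
    (hεa : εa = 1 ∨ εa = -1) (hεb : εb = 1 ∨ εb = -1) (n : Fin N) :
    qF N η ξ (εa * αp) (εb * βp) (εa * αm) (εb * βm) n = qF N η ξ αp βp αm βm n := by
  simp only [qF, mul_assoc _ (gPlus _ _ _ _) (gPlus _ _ _ _),
    mul_assoc _ (gMinus _ _ _ _) (gMinus _ _ _ _),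
    gPlus_mul_gPlus η αp βp (ξ n) hεa hεb, gMinus_mul_gMinus η αm βm (ξ n) hεa hεb]

/-- Lemma 5.1 / `Lem-invariance`: the SOV spectrum `Σ_T` is invariant under
the `Z₂×Z₂×Z₂` sign transformations of the boundary parameters `(τ±, α±, β±)`. -/
theorem statement7
    (N : ℕ) (hN : 1 ≤ N) (η : ℂ) (ξ : Fin N → ℂ)
    (τp τm αp αm βp βm : ℂ)
    (hαβp : Complex.sinh αp * Complex.cosh βp ≠ 0)
    (hαβp' : Complex.cosh αp * Complex.sinh βp ≠ 0)
    (hαβm : Complex.sinh αm * Complex.cosh βm ≠ 0)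
    (hαβm' : Complex.cosh αm * Complex.sinh βm ≠ 0)
    (hζ1 : ∀ a : Fin N, Complex.cosh (2 * zeta0 N η ξ a) ^ 2 ≠ Complex.cosh η ^ 2)
    (hζ2 : ∀ a b : Fin N, a ≠ b →
      Complex.cosh (2 * zeta0 N η ξ a) ≠ Complex.cosh (2 * zeta0 N η ξ b))
    (εt εa εb : ℂ)
    (hεt : εt = 1 ∨ εt = -1) (hεa : εa = 1 ∨ εa = -1) (hεb : εb = 1 ∨ εb = -1) :
    SigmaT N η ξ (εt * τp) (εt * τm) (εa * αp) (εb * βp) (εa * αm) (εb * βm) =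
      SigmaT N η ξ τp τm αp βp αm βm := by
  simp only [SigmaT, fF_sign N η ξ τp τm αp βp αm βm hεt hεa hεb,
    qF_sign N η ξ αp βp αm βm hεa hεb]

end XXZ
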